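/- Let m ≥ 2 be an integer. For every real q with 0 < q < 1, (m−1)·q^{(2m−3)²/(8(m−1))}·G_m(q) = (m−1)·Σ_{k=0}^{∞} χ_{4(m−1)}(k)·q^{k²/(8(m−1))}, where the powers of q are real powers. -/

import Mathlib

open Finset

/-- The q-Pochhammer symbol `(x;q)_n = ∏_{j=0}^{n-1} (1 - x q^j)`. -/
noncomputable def qPoch (x q : ℂ) (n : ℕ) : ℂ := ∏ j ∈ Finset.range n, (1 - x * q ^ j)

/-- The Gaussian binomial coefficient `[n choose k]_q`. -/
noncomputable def qBinom (q : ℂ) (n k : ℕ) : ℂ :=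
  if k ≤ n then qPoch q q n / (qPoch q q (n - k) * qPoch q q k) else 0

/-- Extend a tuple `g : Fin k → ℕ` to `ℕ → ℕ` by zero. -/
def pad (k : ℕ) (g : Fin k → ℕ) : ℕ → ℕ := fun j => if h : j < k then g ⟨j, h⟩ else 0

/-- The general term of the multi-sum `G_m(q)`: here `n j` denotes `n_{j+1}` (0-based indexing),
so `n (m-2)` is `n_{m-1}` and `n 0` is `n_1`. -/
noncomputable def Gterm (m : ℕ) (q : ℂ) (n : ℕ → ℕ) : ℂ :=
  (-1) ^ (n (m - 2)) *
    q ^ (n (m - 2) * (n (m - 2) + 1) +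
        ∑ j ∈ Finset.range (m - 2), (2 * (n j) ^ 2 + 2 * n j)) *
    qPoch q (q ^ 2) (n 0) / qPoch (-q) q (2 * n 0 + 1) *
    ∏ i ∈ Finset.range (m - 2), qBinom (q ^ 2) (n (i + 1)) (n i)

/-- The multi-sum `G_m(q)`. -/
noncomputable def G (m : ℕ) (q : ℂ) : ℂ := ∑' n : Fin (m - 1) → ℕ, Gterm m q (pad (m - 1) n)

/-- The truncated multi-sum `U_{m,N}(q)`. -/
noncomputable def U (m N : ℕ) (q : ℂ) : ℂ :=
  ∑ n ∈ Fintype.piFinset (fun _ : Fin (m - 1) => Finset.range N), Gterm m q (pad (m - 1) n)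

/-- The odd periodic function `χ_{4(m-1)}`. -/
def chiG (m : ℕ) (k : ℤ) : ℤ :=
  if k % (4 * ((m : ℤ) - 1)) = (2 * (m : ℤ) - 3) % (4 * ((m : ℤ) - 1)) then 1
  else if k % (4 * ((m : ℤ) - 1)) = (2 * (m : ℤ) - 1) % (4 * ((m : ℤ) - 1)) then -1
  else 0


noncomputable def PP (p : ℝ) (n : ℕ) : ℝ := ∏ j ∈ Finset.range n, (1 - p ^ (j + 1))

lemma PP_succ (p : ℝ) (n : ℕ) : PP p (n + 1) = PP p n * (1 - p ^ (n + 1)) := by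
  simp [PP, Finset.prod_range_succ]

lemma fac_pos {p : ℝ} (h0 : 0 < p) (h1 : p < 1) (n : ℕ) : 0 < 1 - p ^ (n + 1) := by
  have := pow_lt_one₀ h0.le h1 (Nat.succ_ne_zero n)
  simp only [Nat.succ_eq_add_one] at this
  linarith

lemma PP_pos {p : ℝ} (h0 : 0 < p) (h1 : p < 1) (n : ℕ) : 0 < PP p n :=
  Finset.prod_pos fun j _ => fac_pos h0 h1 j

lemma PP_le_one {p : ℝ} (h0 : 0 < p) (h1 : p < 1) (n : ℕ) : PP p n ≤ 1 :=
  Finset.prod_le_one (fun j _ => (fac_pos h0 h1 j).le) fun j _ => by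
    have := pow_pos h0 (j + 1)
    linarith

lemma PP_lower {p : ℝ} (h0 : 0 < p) (h1 : p < 1) :
    ∃ K : ℝ, 0 < K ∧ ∀ n, (PP p n)⁻¹ ≤ K := by
  refine ⟨Real.exp (p / (1 - p) * (1 - p)⁻¹), Real.exp_pos _, fun n => ?_⟩
  have h2 : (0 : ℝ) < 1 - p := by linarith
  have key : ∀ j, (1 - p ^ (j + 1))⁻¹ ≤ Real.exp (p / (1 - p) * p ^ j) := by
    intro j
    refine le_trans ?_ (Real.add_one_le_exp _)
    have h3 := fac_pos h0 h1 j
    rw [inv_le_iff_one_le_mul₀ h3]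
    have h4 : p ^ (j + 1) ≤ p := by
      have := pow_le_one₀ h0.le h1.le (n := j)
      rw [pow_succ]; nlinarith
    have h5 : p / (1 - p) * p ^ j = p ^ (j + 1) / (1 - p) := by
      rw [pow_succ]; ring
    rw [h5]
    have h6 : 0 < p ^ (j + 1) := pow_pos h0 _
    have h7 : p ^ (j + 1) ≤ p ^ (j + 1) / (1 - p) * (1 - p ^ (j + 1)) := by
      rw [div_mul_eq_mul_div, le_div_iff₀ h2]
      nlinarith
    nlinarith
  have : (PP p n)⁻¹ ≤ ∏ j ∈ Finset.range n, Real.exp (p / (1 - p) * p ^ j) := by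
    rw [PP, ← Finset.prod_inv_distrib]
    exact Finset.prod_le_prod (fun j _ => (inv_pos.2 (fac_pos h0 h1 j)).le) fun j _ => key j
  refine this.trans ?_
  rw [← Real.exp_sum, ← Finset.mul_sum]
  apply Real.exp_le_exp.2
  have hs : ∑ j ∈ Finset.range n, p ^ j ≤ (1 - p)⁻¹ := by
    rw [← tsum_geometric_of_lt_one h0.le h1]
    exact (summable_geometric_of_lt_one h0.le h1).sum_le_tsum _ fun i _ => (pow_pos h0 i).le
  have : 0 < p / (1 - p) := by positivity
  nlinarith

/-- A limiting q-Vandermonde sum. -/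
lemma vander {p : ℝ} (h0 : 0 < p) (h1 : p < 1) (N : ℕ) : ∀ c : ℕ,
    ∑ k ∈ Finset.range (N + 1), p ^ (k ^ 2 + c * k) / (PP p k * PP p (N - k) * PP p (k + c)) =
      1 / (PP p N * PP p (N + c)) := by
  induction N with
  | zero => intro c; simp [PP]
  | succ N ih =>
    intro c
    have hf := fac_pos h0 h1 N
    have hfc := fac_pos h0 h1 (N + c)
    have hP := fun n => (PP_pos h0 h1 n).ne'
    apply mul_left_cancel₀ hf.ne'
    have hsplit : (1 - p ^ (N + 1)) * ∑ k ∈ Finset.range (N + 1 + 1),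
        p ^ (k ^ 2 + c * k) / (PP p k * PP p (N + 1 - k) * PP p (k + c)) =
        ∑ k ∈ Finset.range (N + 1 + 1), (1 - p ^ (N + 1 - k)) *
          (p ^ (k ^ 2 + c * k) / (PP p k * PP p (N + 1 - k) * PP p (k + c))) +
        ∑ k ∈ Finset.range (N + 1 + 1), (p ^ (N + 1 - k) * (1 - p ^ k)) *
          (p ^ (k ^ 2 + c * k) / (PP p k * PP p (N + 1 - k) * PP p (k + c))) := by
      rw [Finset.mul_sum, ← Finset.sum_add_distrib]
      refine Finset.sum_congr rfl fun k hk => ?_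
      have : k ≤ N + 1 := by simp at hk; omega
      have h : p ^ (N + 1) = p ^ (N + 1 - k) * p ^ k := by rw [← pow_add]; congr 1; omega
      rw [h]; ring
    rw [hsplit, Finset.sum_range_succ, Finset.sum_range_succ' _ (N + 1)]
    have e1 : ∑ k ∈ Finset.range (N + 1), (1 - p ^ (N + 1 - k)) *
          (p ^ (k ^ 2 + c * k) / (PP p k * PP p (N + 1 - k) * PP p (k + c))) =
        1 / (PP p N * PP p (N + c)) := by
      rw [← ih c]
      refine Finset.sum_congr rfl fun k hk => ?_
      have hk' : k ≤ N := by simp at hk; omega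
      have h : N + 1 - k = (N - k) + 1 := by omega
      have := fac_pos h0 h1 (N - k)
      rw [h, PP_succ]
      have := hP k; have := hP (N - k); have := hP (k + c)
      field_simp
    have e2 : ∑ k ∈ Finset.range (N + 1), (p ^ (N + 1 - (k + 1)) * (1 - p ^ (k + 1))) *
          (p ^ ((k + 1) ^ 2 + c * (k + 1)) /
            (PP p (k + 1) * PP p (N + 1 - (k + 1)) * PP p (k + 1 + c))) =
        p ^ (N + c + 1) * (1 / (PP p N * PP p (N + (c + 1)))) := by
      rw [← ih (c + 1), Finset.mul_sum]
      refine Finset.sum_congr rfl fun k hk => ?_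
      have hk' : k ≤ N := by simp at hk; omega
      have h : N + 1 - (k + 1) = N - k := by omega
      have := fac_pos h0 h1 k
      have hp : p ^ (N - k) * p ^ ((k + 1) ^ 2 + c * (k + 1)) =
          p ^ (N + c + 1) * p ^ (k ^ 2 + (c + 1) * k) := by
        rw [← pow_add, ← pow_add]; congr 1
        obtain ⟨d, rfl⟩ := Nat.exists_eq_add_of_le hk'
        simp only [Nat.add_sub_cancel_left]; ring
      rw [h, PP_succ, show k + 1 + c = k + (c + 1) by ring]
      have := hP k; have := hP (N - k); have := hP (k + (c + 1))
      rw [← mul_div_assoc, ← mul_div_assoc, ← hp]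
      field_simp
    rw [e1, e2]
    simp only [Nat.sub_self, pow_zero, sub_self, zero_mul, mul_zero, add_zero]
    rw [show N + 1 + c = N + c + 1 by ring, show N + (c + 1) = N + c + 1 by ring, PP_succ p N,
      PP_succ p (N + c)]
    have := hP N; have := hP (N + c)
    field_simp
    ring

/-- The finite q-binomial theorem (base p). -/
lemma qbinthm {p : ℝ} (h0 : 0 < p) (h1 : p < 1) (x : ℝ) (N : ℕ) :
    ∑ k ∈ Finset.range (N + 1), (-1) ^ k * p ^ (k.choose 2) * x ^ k / (PP p k * PP p (N - k)) =
      (∏ j ∈ Finset.range N, (1 - x * p ^ j)) / PP p N := by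
  induction N with
  | zero => simp [PP]
  | succ N ih =>
    have hf := fac_pos h0 h1 N
    have hP := fun n => (PP_pos h0 h1 n).ne'
    apply mul_left_cancel₀ hf.ne'
    have hsplit : (1 - p ^ (N + 1)) * ∑ k ∈ Finset.range (N + 1 + 1),
        (-1) ^ k * p ^ (k.choose 2) * x ^ k / (PP p k * PP p (N + 1 - k)) =
        ∑ k ∈ Finset.range (N + 1 + 1), (1 - p ^ (N + 1 - k)) *
          ((-1) ^ k * p ^ (k.choose 2) * x ^ k / (PP p k * PP p (N + 1 - k))) +
        ∑ k ∈ Finset.range (N + 1 + 1), (p ^ (N + 1 - k) * (1 - p ^ k)) *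
          ((-1) ^ k * p ^ (k.choose 2) * x ^ k / (PP p k * PP p (N + 1 - k))) := by
      rw [Finset.mul_sum, ← Finset.sum_add_distrib]
      refine Finset.sum_congr rfl fun k hk => ?_
      have : k ≤ N + 1 := by simp at hk; omega
      have h : p ^ (N + 1) = p ^ (N + 1 - k) * p ^ k := by rw [← pow_add]; congr 1; omega
      rw [h]; ring
    rw [hsplit, Finset.sum_range_succ, Finset.sum_range_succ' _ (N + 1)]
    have e1 : ∑ k ∈ Finset.range (N + 1), (1 - p ^ (N + 1 - k)) *
          ((-1) ^ k * p ^ (k.choose 2) * x ^ k / (PP p k * PP p (N + 1 - k))) =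
        (∏ j ∈ Finset.range N, (1 - x * p ^ j)) / PP p N := by
      rw [← ih]
      refine Finset.sum_congr rfl fun k hk => ?_
      have hk' : k ≤ N := by simp at hk; omega
      have h : N + 1 - k = (N - k) + 1 := by omega
      have := fac_pos h0 h1 (N - k)
      rw [h, PP_succ]
      have := hP k; have := hP (N - k)
      field_simp
    have e2 : ∑ k ∈ Finset.range (N + 1), (p ^ (N + 1 - (k + 1)) * (1 - p ^ (k + 1))) *
          ((-1) ^ (k + 1) * p ^ ((k + 1).choose 2) * x ^ (k + 1) /
            (PP p (k + 1) * PP p (N + 1 - (k + 1)))) =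
        (- x * p ^ N) * ((∏ j ∈ Finset.range N, (1 - x * p ^ j)) / PP p N) := by
      rw [← ih, Finset.mul_sum]
      refine Finset.sum_congr rfl fun k hk => ?_
      have hk' : k ≤ N := by simp at hk; omega
      have h : N + 1 - (k + 1) = N - k := by omega
      have := fac_pos h0 h1 k
      have hp : p ^ (N - k) * p ^ ((k + 1).choose 2) = p ^ N * p ^ (k.choose 2) := by
        rw [← pow_add, ← pow_add]; congr 1
        have : (k + 1).choose 2 = k + k.choose 2 := by
          rw [Nat.choose_succ_succ' k 1]; simp
        omega
      rw [h, PP_succ]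
      have := hP k; have := hP (N - k)
      have hp2 : p ^ (N - k) * (1 - p ^ (k + 1)) *
          ((-1) ^ (k + 1) * p ^ ((k + 1).choose 2) * x ^ (k + 1) /
            (PP p k * (1 - p ^ (k + 1)) * PP p (N - k))) =
          (p ^ (N - k) * p ^ ((k + 1).choose 2)) * ((-1) ^ (k + 1) * x ^ (k + 1) /
            (PP p k * PP p (N - k))) := by
        field_simp
      rw [hp2, hp]
      ring
    rw [e1, e2]
    simp only [Nat.sub_self, pow_zero, sub_self, zero_mul, mul_zero, add_zero]
    rw [PP_succ p N, Finset.prod_range_succ]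
    have := hP N
    field_simp
    ring

lemma hasSum_u {p : ℝ} (h0 : 0 < p) (h1 : p < 1) (a : ℕ) : ∀ d : ℕ,
    HasSum (fun k : ℕ => (-1) ^ k * p ^ ((k + 1).choose 2 + d * k) * PP p (a + k) /
      (PP p k * PP p (a + d + 1 + k))) (PP p a / PP p d) := by
  have hP := fun n => (PP_pos h0 h1 n).ne'
  induction a with
  | zero =>
    intro d
    obtain ⟨K, hK0, hK⟩ := PP_lower h0 h1
    have hch : ∀ k : ℕ, (k + 1).choose 2 = k + k.choose 2 := fun k => by
      rw [Nat.choose_succ_succ' k 1]; simp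
    have hbd : ∀ k n : ℕ, ‖(-1 : ℝ) ^ k * p ^ ((k + 1).choose 2 + d * k) / PP p n‖ ≤ K * p ^ k := by
      intro k n
      rw [norm_div, norm_mul, norm_pow, norm_neg, norm_one, one_pow, one_mul,
        Real.norm_of_nonneg (pow_pos h0 _).le, Real.norm_of_nonneg (PP_pos h0 h1 n).le,
        div_eq_mul_inv, mul_comm]
      apply mul_le_mul (hK n) _ (pow_pos h0 _).le hK0.le
      apply pow_le_pow_of_le_one h0.le h1.le
      rw [hch]; omega
    have hg : Summable fun k : ℕ => K * p ^ k := (summable_geometric_of_lt_one h0.le h1).mul_left K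
    have heq : ∀ k : ℕ, (-1) ^ k * p ^ ((k + 1).choose 2 + d * k) * PP p (0 + k) /
      (PP p k * PP p (0 + d + 1 + k)) =
      (-1) ^ k * p ^ ((k + 1).choose 2 + d * k) / PP p (d + 1 + k) := by
      intro k
      rw [zero_add, zero_add]
      have := hP k
      field_simp
    simp only [heq]
    rw [hasSum_iff_tendsto_nat_of_summable_norm
      (hg.of_nonneg_of_le (fun _ => norm_nonneg _) fun k => hbd k _)]
    have htel : ∀ n, ∑ k ∈ Finset.range n,
        (-1) ^ k * p ^ ((k + 1).choose 2 + d * k) / PP p (d + 1 + k) =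
        1 / PP p d - (-1) ^ n * p ^ ((n + 1).choose 2 + d * n) / PP p (d + n) := by
      intro n
      induction n with
      | zero => simp
      | succ n ih =>
        rw [Finset.sum_range_succ, ih, show d + 1 + n = d + n + 1 by ring,
          show d + (n + 1) = d + n + 1 by ring, PP_succ p (d + n),
          show (n + 1 + 1).choose 2 + d * (n + 1) = ((n + 1).choose 2 + d * n) + (d + n + 1) by
            rw [hch (n + 1)]; ring, pow_add p _ (d + n + 1)]
        have := hP (d + n); have := hP d; have := fac_pos h0 h1 (d + n)
        field_simp
        ring
    simp only [htel]
    have : Filter.Tendsto (fun n => (-1) ^ n * p ^ ((n + 1).choose 2 + d * n) / PP p (d + n))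
        Filter.atTop (nhds 0) :=
      squeeze_zero_norm (fun n => hbd n _) hg.tendsto_atTop_zero
    have h := this.const_sub (1 / PP p d)
    simpa [PP] using h
  | succ a ih =>
    intro d
    have h := (ih d).sub ((ih (d + 1)).mul_left (p ^ (a + 1) * (1 - p ^ (d + 1))))
    convert h using 1
    · rfl
    · funext k
      rw [show a + 1 + k = (a + k) + 1 by ring, show a + 1 + d + 1 + k = (a + d + 1 + k) + 1 by ring,
        show a + (d + 1) + 1 + k = (a + d + 1 + k) + 1 by ring, PP_succ p (a + k),
        PP_succ p (a + d + 1 + k), show (k + 1).choose 2 + (d + 1) * k =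
          ((k + 1).choose 2 + d * k) + k by ring, pow_add p _ k]
      have := hP k; have := hP (a + d + 1 + k); have := fac_pos h0 h1 (a + d + 1 + k)
      field_simp
      ring
    · rw [PP_succ, PP_succ]
      have := hP d; have := fac_pos h0 h1 d
      field_simp

noncomputable def QO (q : ℝ) (n : ℕ) : ℝ := ∏ j ∈ Finset.range n, (1 - q ^ (2 * j + 1))

noncomputable def RR (q : ℝ) (n : ℕ) : ℝ := ∏ j ∈ Finset.range n, (1 + q ^ (j + 1))

lemma PP_odd (q : ℝ) (n : ℕ) : PP q (2 * n + 1) = QO q (n + 1) * PP (q ^ 2) n := by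
  induction n with
  | zero => simp [PP, QO]
  | succ n ih =>
    rw [show 2 * (n + 1) + 1 = 2 * n + 1 + 1 + 1 by ring, PP_succ, PP_succ, ih, PP_succ, QO, QO,
      Finset.prod_range_succ _ (n + 1), ← pow_mul]
    ring_nf

lemma PP_sq (q : ℝ) (n : ℕ) : PP (q ^ 2) n = PP q n * RR q n := by
  rw [PP, PP, RR, ← Finset.prod_mul_distrib]
  refine Finset.prod_congr rfl fun j _ => ?_
  ring

noncomputable def AA (q : ℝ) (r : ℕ) : ℝ := (-1) ^ r * (q ^ (r ^ 2) - q ^ ((r + 1) ^ 2))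

lemma two_choose (k : ℕ) : 2 * k.choose 2 + k = k ^ 2 := by
  induction k with
  | zero => simp
  | succ k ih =>
    rw [Nat.choose_succ_succ' k 1]; simp; nlinarith

lemma jtp {q : ℝ} (h0 : 0 < q) (h1 : q < 1) (n : ℕ) :
    ∑ r ∈ Finset.range (n + 1), AA q r / (PP (q ^ 2) (n - r) * PP (q ^ 2) (n + r + 1)) =
      QO q n * QO q (n + 1) / PP (q ^ 2) (2 * n + 1) := by
  have hp0 : 0 < q ^ 2 := by positivity
  have hp1 : q ^ 2 < 1 := pow_lt_one₀ h0.le h1 (by norm_num)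
  have hP := fun n => (PP_pos hp0 hp1 n).ne'
  have hb := qbinthm hp0 hp1 ((q ^ (2 * n + 1))⁻¹) (2 * n + 1)
  have hq := h0.ne'
  set C : ℝ := (-1) ^ (n + 1) * (q ^ ((n + 1) ^ 2))⁻¹ with hC
  have hC0 : C ≠ 0 := by rw [hC]; positivity
  have hprod : ∏ j ∈ Finset.range (2 * n + 1), (1 - (q ^ (2 * n + 1))⁻¹ * (q ^ 2) ^ j) =
      C * (QO q n * QO q (n + 1)) := by
    rw [show 2 * n + 1 = (n + 1) + n by ring, Finset.prod_range_add]
    have e2 : ∏ j ∈ Finset.range n, (1 - (q ^ (n + 1 + n))⁻¹ * (q ^ 2) ^ (n + 1 + j)) = QO q n := by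
      rw [QO]
      refine Finset.prod_congr rfl fun j _ => ?_
      congr 1
      rw [inv_mul_eq_iff_eq_mul₀ (pow_ne_zero _ hq), ← pow_mul, ← pow_add]
      congr 1; ring
    have e1 : ∏ j ∈ Finset.range (n + 1), (1 - (q ^ (n + 1 + n))⁻¹ * (q ^ 2) ^ j) =
        C * QO q (n + 1) := by
      rw [← Finset.prod_range_reflect]
      have : ∀ j ∈ Finset.range (n + 1), (1 - (q ^ (n + 1 + n))⁻¹ * (q ^ 2) ^ (n + 1 - 1 - j)) =
          (-(q ^ (2 * j + 1))⁻¹) * (1 - q ^ (2 * j + 1)) := by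
        intro j hj
        have hj' : j ≤ n := by simp at hj; omega
        obtain ⟨d, rfl⟩ := Nat.exists_eq_add_of_le hj'
        have h3 : j + d + 1 - 1 - j = d := by omega
        rw [h3, ← pow_mul, show j + d + 1 + (j + d) = (2 * j + 1) + 2 * d by ring, pow_add]
        field_simp
        ring
      rw [Finset.prod_congr rfl this, Finset.prod_mul_distrib, ← QO]
      congr 1
      rw [hC]
      clear_value C
      clear this e2 hb hC hC0
      induction n with
      | zero => simp
      | succ n ih =>
        rw [Finset.prod_range_succ, ih, show (n + 1 + 1) ^ 2 = (n + 1) ^ 2 + (2 * (n + 1) + 1) by ring,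
          pow_add q]
        rw [mul_inv]; ring
    rw [e1, e2]; ring
  rw [hprod, show 2 * n + 1 + 1 = (n + 1) + (n + 1) by ring, Finset.sum_range_add,
    ← Finset.sum_range_reflect, ← Finset.sum_add_distrib] at hb
  apply mul_left_cancel₀ hC0
  rw [← mul_div_assoc, ← hb, Finset.mul_sum]
  refine Finset.sum_congr rfl fun r hr => ?_
  have hr' : r ≤ n := by simp at hr; omega
  obtain ⟨d, rfl⟩ := Nat.exists_eq_add_of_le hr'
  rw [show r + d + 1 - 1 - r = d by omega, show 2 * (r + d) + 1 - d = r + d + r + 1 by omega,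
    show 2 * (r + d) + 1 - (r + d + 1 + r) = d by omega, show r + d - r = d by omega,
    show r + d + 1 + r = r + d + r + 1 by omega]
  have key : ∀ k s : ℕ, (k : ℤ) - (r + d + 1) = s ∨ (k : ℤ) - (r + d + 1) = -s →
      (q ^ 2) ^ (k.choose 2) * (q ^ (2 * (r + d) + 1))⁻¹ ^ k =
      (q ^ ((r + d + 1) ^ 2))⁻¹ * q ^ (s ^ 2) := by
    intro k s hks
    have h3 : ((k : ℤ) - (r + d + 1)) ^ 2 = s ^ 2 := by
      rcases hks with h | h <;> rw [h]; ring
    have h4 := two_choose k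
    have h5 : 2 * k.choose 2 + (r + d + 1) ^ 2 = s ^ 2 + (2 * (r + d) + 1) * k := by
      zify at h4 ⊢
      nlinarith
    rw [inv_pow, ← pow_mul, ← pow_mul]
    field_simp
    rw [← pow_add, ← pow_add, h5]
    try ring_nf
  have k1 := key d (r + 1) (by right; push_cast; ring)
  have k2 := key (r + d + r + 1) r (by left; push_cast; ring)
  rw [mul_assoc _ _ ((q ^ (2 * (r + d) + 1))⁻¹ ^ d), k1,
    mul_assoc _ _ ((q ^ (2 * (r + d) + 1))⁻¹ ^ _), k2, AA, hC]
  have s1 : (-1 : ℝ) ^ (r + d + 1) * (-1) ^ r = - (-1) ^ d := by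
    rw [← pow_add, show r + d + 1 + r = 2 * r + (d + 1) by ring, pow_add, pow_mul]; norm_num
    ring
  have s2 : (-1 : ℝ) ^ (r + d + r + 1) = - (-1) ^ d := by
    rw [show r + d + r + 1 = 2 * r + (d + 1) by ring, pow_add, pow_mul]; norm_num
    ring
  rw [s2]
  have : (-1 : ℝ) ^ (r + d + 1) * (q ^ (r + d + 1) ^ 2)⁻¹ *
    ((-1) ^ r * (q ^ r ^ 2 - q ^ (r + 1) ^ 2) / (PP (q ^ 2) d * PP (q ^ 2) (r + d + r + 1))) =
    ((-1 : ℝ) ^ (r + d + 1) * (-1) ^ r) * (q ^ (r + d + 1) ^ 2)⁻¹ *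
    ((q ^ r ^ 2 - q ^ (r + 1) ^ 2) / (PP (q ^ 2) d * PP (q ^ 2) (r + d + r + 1))) := by ring
  rw [this, s1]
  ring

noncomputable def bb (q : ℝ) : ℕ → ℕ → ℝ
  | 0, N => QO q N / RR q (2 * N + 1)
  | k + 1, N => ∑ r ∈ Finset.range (N + 1), (q ^ 2) ^ (r ^ 2 + r) *
      (PP (q ^ 2) N / (PP (q ^ 2) (N - r) * PP (q ^ 2) r)) * bb q k r

lemma bb_closed {q : ℝ} (h0 : 0 < q) (h1 : q < 1) (k : ℕ) : ∀ N,
    bb q k N = PP (q ^ 2) N * ∑ r ∈ Finset.range (N + 1), (q ^ 2) ^ (k * (r ^ 2 + r)) * AA q r /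
      (PP (q ^ 2) (N - r) * PP (q ^ 2) (N + r + 1)) := by
  have hp0 : 0 < q ^ 2 := by positivity
  have hp1 : q ^ 2 < 1 := pow_lt_one₀ h0.le h1 (by norm_num)
  have hP := fun n => (PP_pos hp0 hp1 n).ne'
  induction k with
  | zero =>
    intro N
    simp only [zero_mul, pow_zero, one_mul]
    rw [jtp h0 h1, bb, PP_sq q (2 * N + 1), PP_odd]
    have h2 := hP N
    have h3 := hP (2 * N + 1)
    rw [PP_sq, PP_odd] at h3
    have h4 : QO q (N + 1) ≠ 0 := fun h => h3 (by rw [h]; ring)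
    have h5 : RR q (2 * N + 1) ≠ 0 := fun h => h3 (by rw [h]; ring)
    field_simp
  | succ k ih =>
    intro N
    rw [bb]
    have e1 : ∀ r ∈ Finset.range (N + 1), (q ^ 2) ^ (r ^ 2 + r) *
      (PP (q ^ 2) N / (PP (q ^ 2) (N - r) * PP (q ^ 2) r)) * bb q k r =
      ∑ s ∈ Finset.range (r + 1), PP (q ^ 2) N * ((q ^ 2) ^ (k * (s ^ 2 + s)) * AA q s *
        ((q ^ 2) ^ (r ^ 2 + r) / (PP (q ^ 2) (r - s) * PP (q ^ 2) (N - r) *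
          PP (q ^ 2) (r + s + 1)))) := by
      intro r _
      rw [ih, ← mul_assoc, Finset.mul_sum]
      refine Finset.sum_congr rfl fun s _ => ?_
      have := hP r
      field_simp
    rw [Finset.sum_congr rfl e1, Finset.mul_sum,
      Finset.sum_comm' (s := Finset.range (N + 1)) (t := fun r => Finset.range (r + 1))
        (t' := Finset.range (N + 1)) (s' := fun s => Finset.Ico s (N + 1))
        (by intro x y; simp only [Finset.mem_range, Finset.mem_Ico]; omega)]
    refine Finset.sum_congr rfl fun s hs => ?_
    have hs' : s ≤ N := by simp at hs; omega
    rw [← Finset.mul_sum, ← Finset.mul_sum, Finset.sum_Ico_eq_sum_range]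
    have e2 := vander hp0 hp1 (N - s) (2 * s + 1)
    rw [show N + 1 - s = N - s + 1 by omega]
    have e3 : ∑ i ∈ Finset.range (N - s + 1), (q ^ 2) ^ ((s + i) ^ 2 + (s + i)) /
        (PP (q ^ 2) (s + i - s) * PP (q ^ 2) (N - (s + i)) * PP (q ^ 2) (s + i + s + 1)) =
        (q ^ 2) ^ (s ^ 2 + s) * (1 / (PP (q ^ 2) (N - s) * PP (q ^ 2) (N - s + (2 * s + 1)))) := by
      rw [← e2, Finset.mul_sum]
      refine Finset.sum_congr rfl fun i _ => ?_
      rw [← mul_div_assoc, ← pow_add, show s + i - s = i by omega, show N - (s + i) = N - s - i by omega,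
        show s + i + s + 1 = i + (2 * s + 1) by ring]
      congr 2
      ring
    rw [e3, show N - s + (2 * s + 1) = N + s + 1 by omega, add_mul, pow_add, one_mul]
    ring

lemma AA_norm {q : ℝ} (h0 : 0 < q) (h1 : q < 1) (r : ℕ) : ‖AA q r‖ ≤ 1 := by
  rw [AA, norm_mul, norm_pow, norm_neg, norm_one, one_pow, one_mul, Real.norm_eq_abs, abs_le]
  have a1 := pow_pos h0 (r ^ 2)
  have a2 := pow_pos h0 ((r + 1) ^ 2)
  have a3 := pow_le_one₀ h0.le h1.le (n := r ^ 2)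
  have a4 := pow_le_one₀ h0.le h1.le (n := (r + 1) ^ 2)
  constructor <;> linarith

lemma final_sum {q : ℝ} (h0 : 0 < q) (h1 : q < 1) (k : ℕ) :
    ∑' N : ℕ, (-1) ^ N * q ^ (N * (N + 1)) * bb q k N =
    ∑' r : ℕ, (q ^ 2) ^ (k * (r ^ 2 + r)) * q ^ (r * (r + 1)) *
      (q ^ (r ^ 2) - q ^ ((r + 1) ^ 2)) := by
  have hp0 : 0 < q ^ 2 := by positivity
  have hp1 : q ^ 2 < 1 := pow_lt_one₀ h0.le h1 (by norm_num)
  have hP := fun n => (PP_pos hp0 hp1 n).ne'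
  obtain ⟨K, hK0, hK⟩ := PP_lower hp0 hp1
  let f : ℕ × ℕ → ℝ := fun x => (-1) ^ (x.1 + x.2) * q ^ ((x.1 + x.2) * (x.1 + x.2 + 1)) *
    (PP (q ^ 2) (x.1 + x.2) * ((q ^ 2) ^ (k * (x.1 ^ 2 + x.1)) * AA q x.1 /
      (PP (q ^ 2) x.2 * PP (q ^ 2) (x.1 + x.2 + x.1 + 1))))
  have hf : Summable f := by
    have hg : Summable fun x : ℕ × ℕ => (K * K) * (q ^ x.1 * q ^ x.2) :=
      ((summable_geometric_of_lt_one h0.le h1).mul_of_nonneg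
        (summable_geometric_of_lt_one h0.le h1) (fun i => (pow_pos h0 i).le)
        (fun i => (pow_pos h0 i).le)).mul_left _
    refine Summable.of_norm_bounded hg ?_
    rintro ⟨r, i⟩
    simp only [f, norm_mul, norm_div, norm_pow, norm_neg, norm_one, one_pow, one_mul]
    rw [Real.norm_of_nonneg h0.le, Real.norm_of_nonneg (PP_pos hp0 hp1 _).le,
      Real.norm_of_nonneg (PP_pos hp0 hp1 _).le, Real.norm_of_nonneg (PP_pos hp0 hp1 _).le]
    have b1 : q ^ ((r + i) * (r + i + 1)) ≤ q ^ r * q ^ i := by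
      rw [← pow_add]
      exact pow_le_pow_of_le_one h0.le h1.le (by nlinarith)
    have b2 := PP_le_one hp0 hp1 (r + i)
    have b3 : (q ^ 2) ^ (k * (r ^ 2 + r)) ≤ 1 := pow_le_one₀ hp0.le hp1.le
    have b4 : (q ^ 2) ^ (k * (r ^ 2 + r)) * ‖AA q r‖ ≤ 1 :=
      mul_le_one₀ b3 (norm_nonneg _) (AA_norm h0 h1 r)
    have b5 : (PP (q ^ 2) i * PP (q ^ 2) (r + i + r + 1))⁻¹ ≤ K * K := by
      rw [mul_inv]
      exact mul_le_mul (hK _) (hK _) (inv_pos.2 (PP_pos hp0 hp1 _)).le hK0.le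
    have b6 : 0 ≤ (PP (q ^ 2) i * PP (q ^ 2) (r + i + r + 1))⁻¹ :=
      (inv_pos.2 (mul_pos (PP_pos hp0 hp1 _) (PP_pos hp0 hp1 _))).le
    have b7 : 0 ≤ (q ^ 2) ^ (k * (r ^ 2 + r)) * ‖AA q r‖ := by positivity
    have b8 := (PP_pos hp0 hp1 (r + i)).le
    rw [div_eq_mul_inv, mul_comm (K * K)]
    apply mul_le_mul b1 _ (by positivity) (by positivity)
    calc _ ≤ 1 * (1 * (K * K)) := by
          apply mul_le_mul b2 _ (by positivity) (by positivity)
          exact mul_le_mul b4 b5 b6 (by positivity)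
      _ = _ := by ring
  have h3 : ∑' N : ℕ, (-1) ^ N * q ^ (N * (N + 1)) * bb q k N = ∑' x, f x := by
    rw [← Finset.HasAntidiagonal.sigmaAntidiagonalEquivProd.tsum_eq f]
    have hf' : Summable (f ∘ Finset.HasAntidiagonal.sigmaAntidiagonalEquivProd) :=
      (Finset.HasAntidiagonal.sigmaAntidiagonalEquivProd.summable_iff).2 hf
    have := hf'.tsum_sigma
    simp only [Function.comp_apply] at this
    rw [this]
    congr 1
    funext N
    rw [tsum_fintype, bb_closed h0 h1]
    simp only [Finset.HasAntidiagonal.sigmaAntidiagonalEquivProd_apply]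
    rw [Finset.sum_coe_sort (Finset.HasAntidiagonal.antidiagonal N) (fun x => f x),
      Finset.Nat.sum_antidiagonal_eq_sum_range_succ_mk, Finset.mul_sum, Finset.mul_sum]
    refine Finset.sum_congr rfl fun r hr => ?_
    have hr' : r ≤ N := by simp at hr; omega
    simp only [f]
    rw [show r + (N - r) = N by omega]
  rw [h3, hf.tsum_prod]
  congr 1
  funext r
  have h4 := ((hasSum_u hp0 hp1 r r).mul_left ((q ^ 2) ^ (k * (r ^ 2 + r)) * q ^ (r * (r + 1)) *
      (q ^ (r ^ 2) - q ^ ((r + 1) ^ 2)))).tsum_eq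
  rw [div_self (hP r), mul_one] at h4
  rw [← h4]
  congr 1
  funext i
  simp only [f, AA]
  have h5 : q ^ ((r + i) * (r + i + 1)) = q ^ (r * (r + 1)) * (q ^ 2) ^ ((i + 1).choose 2 + r * i) := by
    rw [← pow_mul, ← pow_add]
    congr 1
    have := two_choose (i + 1)
    nlinarith
  rw [h5, show r + i + r + 1 = r + r + 1 + i by ring, pow_add (-1 : ℝ) r i]
  have h6 : (-1 : ℝ) ^ r * (-1) ^ r = 1 := by rw [← mul_pow]; simp
  calc _ = ((-1 : ℝ) ^ r * (-1) ^ r) * ((q ^ 2) ^ (k * (r ^ 2 + r)) * q ^ (r * (r + 1)) *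
      (q ^ (r ^ 2) - q ^ ((r + 1) ^ 2)) * ((-1) ^ i * (q ^ 2) ^ ((i + 1).choose 2 + r * i) *
        PP (q ^ 2) (r + i) / (PP (q ^ 2) i * PP (q ^ 2) (r + r + 1 + i)))) := by ring
    _ = _ := by rw [h6, one_mul]

noncomputable def RB (q : ℝ) (N r : ℕ) : ℝ :=
  if r ≤ N then PP (q ^ 2) N / (PP (q ^ 2) (N - r) * PP (q ^ 2) r) else 0

noncomputable def RT (q : ℝ) (k : ℕ) (n : ℕ → ℕ) : ℝ :=
  q ^ (∑ j ∈ Finset.range k, (2 * (n j) ^ 2 + 2 * n j)) * bb q 0 (n 0) *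
    ∏ i ∈ Finset.range k, RB q (n (i + 1)) (n i)

lemma pad_snoc_lt (k : ℕ) (n : Fin k → ℕ) (N j : ℕ) (hj : j < k) :
    pad (k + 1) (Fin.snocEquiv (fun _ => ℕ) (N, n)) j = pad k n j := by
  simp only [pad]
  rw [dif_pos (by omega : j < k + 1), dif_pos hj]
  simp [Fin.snocEquiv, Fin.snoc, hj]

lemma pad_snoc_last (k : ℕ) (n : Fin k → ℕ) (N : ℕ) :
    pad (k + 1) (Fin.snocEquiv (fun _ => ℕ) (N, n)) k = N := by
  simp only [pad]
  rw [dif_pos (by omega : k < k + 1)]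
  simp [Fin.snocEquiv, Fin.snoc]

lemma RT_snoc (q : ℝ) (k : ℕ) (n : Fin (k + 1) → ℕ) (N : ℕ) :
    RT q (k + 1) (pad (k + 1 + 1) (Fin.snocEquiv (fun _ => ℕ) (N, n))) =
      (q ^ 2) ^ ((pad (k + 1) n k) ^ 2 + pad (k + 1) n k) * RB q N (pad (k + 1) n k) *
        RT q k (pad (k + 1) n) := by
  rw [RT, RT, Finset.sum_range_succ, Finset.prod_range_succ, pad_snoc_last (k + 1),
    pad_snoc_lt (k + 1) n N k (by omega), pad_snoc_lt (k + 1) n N 0 (by omega)]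
  have e1 : ∀ j ∈ Finset.range k, (2 * (pad (k + 1 + 1) (Fin.snocEquiv (fun _ => ℕ) (N, n)) j) ^ 2 +
      2 * pad (k + 1 + 1) (Fin.snocEquiv (fun _ => ℕ) (N, n)) j) =
      2 * (pad (k + 1) n j) ^ 2 + 2 * pad (k + 1) n j := by
    intro j hj
    rw [pad_snoc_lt (k + 1) n N j (by simp at hj; omega)]
  have e2 : ∀ j ∈ Finset.range k, RB q (pad (k + 1 + 1) (Fin.snocEquiv (fun _ => ℕ) (N, n)) (j + 1))
      (pad (k + 1 + 1) (Fin.snocEquiv (fun _ => ℕ) (N, n)) j) =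
      RB q (pad (k + 1) n (j + 1)) (pad (k + 1) n j) := by
    intro j hj
    rw [pad_snoc_lt (k + 1) n N j (by simp at hj; omega),
      pad_snoc_lt (k + 1) n N (j + 1) (by simp at hj; omega)]
  rw [Finset.sum_congr rfl e1, Finset.prod_congr rfl e2, pow_add, ← pow_mul, mul_add]
  ring

lemma bb0_norm {q : ℝ} (h0 : 0 < q) (h1 : q < 1) (N : ℕ) : ‖bb q 0 N‖ ≤ 1 := by
  have a1 : 0 ≤ QO q N := Finset.prod_nonneg fun j _ => (fac_pos h0 h1 (2 * j)).le
  have a2 : QO q N ≤ 1 := Finset.prod_le_one (fun j _ => (fac_pos h0 h1 (2 * j)).le) fun j _ => by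
    have := pow_pos h0 (2 * j + 1)
    linarith
  have a3 : 1 ≤ RR q (2 * N + 1) := by
    have h := Finset.prod_le_prod (s := Finset.range (2 * N + 1)) (f := fun _ => (1 : ℝ))
      (g := fun j => 1 + q ^ (j + 1)) (fun _ _ => zero_le_one) fun j _ => by
        have := pow_pos h0 (j + 1)
        linarith
    rw [Finset.prod_const_one] at h
    exact h
  rw [bb, Real.norm_of_nonneg (by positivity), div_le_one (by positivity)]
  linarith

lemma tuple_sum {q : ℝ} (h0 : 0 < q) (h1 : q < 1) (k : ℕ) : ∀ (s : ℕ → ℝ) (C : ℝ),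
    (∀ N, ‖s N‖ ≤ C * q ^ N) →
    Summable (fun n : Fin (k + 1) → ℕ => s (pad (k + 1) n k) * RT q k (pad (k + 1) n)) ∧
    ∑' n : Fin (k + 1) → ℕ, s (pad (k + 1) n k) * RT q k (pad (k + 1) n) =
      ∑' N, s N * bb q k N := by
  have hp0 : 0 < q ^ 2 := by positivity
  have hp1 : q ^ 2 < 1 := pow_lt_one₀ h0.le h1 (by norm_num)
  obtain ⟨K, hK0, hK⟩ := PP_lower hp0 hp1
  have hRB : ∀ N r, ‖RB q N r‖ ≤ K * K := by
    intro N r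
    rw [RB]
    split_ifs
    · have b2 := PP_le_one hp0 hp1 N
      have b3 := (PP_pos hp0 hp1 N).le
      have b4 := PP_pos hp0 hp1 (N - r)
      have b5 := PP_pos hp0 hp1 r
      rw [Real.norm_of_nonneg (by positivity), div_eq_mul_inv, mul_inv]
      calc _ ≤ 1 * (K * K) := by
            apply mul_le_mul b2 _ (by positivity) (by positivity)
            exact mul_le_mul (hK _) (hK _) (by positivity) hK0.le
        _ = _ := one_mul _
    · simp only [norm_zero]; positivity
  have hgeo := summable_geometric_of_lt_one h0.le h1
  induction k with
  | zero =>
    intro s C hs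
    have hterm : (fun n : Fin (0 + 1) → ℕ => s (pad (0 + 1) n 0) * RT q 0 (pad (0 + 1) n)) =
        (fun N => s N * bb q 0 N) ∘ (Equiv.funUnique (Fin 1) ℕ) := by
      funext n
      simp [RT, pad]
    rw [hterm, (Equiv.funUnique (Fin 1) ℕ).summable_iff]
    refine ⟨?_, (Equiv.funUnique (Fin 1) ℕ).tsum_eq (fun N => s N * bb q 0 N)⟩
    refine Summable.of_norm_bounded (hgeo.mul_left C) fun N => ?_
    rw [norm_mul]
    calc _ ≤ (C * q ^ N) * 1 := mul_le_mul (hs N) (bb0_norm h0 h1 N) (norm_nonneg _)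
          ((norm_nonneg _).trans (hs N))
      _ = _ := mul_one _
  | succ k ih =>
    intro s C hs
    have hC : 0 ≤ C := by
      have := (norm_nonneg _).trans (hs 0)
      simpa using this
    have hw : ∀ N r, ‖(q ^ 2) ^ (r ^ 2 + r) * RB q N r‖ ≤ (K * K) * q ^ r := by
      intro N r
      rw [norm_mul, Real.norm_of_nonneg (by positivity), mul_comm]
      apply mul_le_mul (hRB N r) _ (by positivity) (by positivity)
      rw [← pow_mul]
      exact pow_le_pow_of_le_one h0.le h1.le (by nlinarith)
    let e := Fin.snocEquiv (n := k + 1) (fun _ : Fin (k + 1 + 1) => ℕ)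
    let f : (Fin (k + 1 + 1) → ℕ) → ℝ :=
      fun n => s (pad (k + 1 + 1) n (k + 1)) * RT q (k + 1) (pad (k + 1 + 1) n)
    have hfe : ∀ x : ℕ × (Fin (k + 1) → ℕ), f (e x) = s x.1 *
        (((q ^ 2) ^ ((pad (k + 1) x.2 k) ^ 2 + pad (k + 1) x.2 k) * RB q x.1 (pad (k + 1) x.2 k)) *
        RT q k (pad (k + 1) x.2)) := by
      rintro ⟨N, n⟩
      simp only [f, e]
      rw [RT_snoc, pad_snoc_last]
    have hsum : Summable (fun x : ℕ × (Fin (k + 1) → ℕ) => f (e x)) := by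
      have hn := (ih (fun N => q ^ N) 1 (by
        intro N; rw [Real.norm_of_nonneg (by positivity), one_mul])).1.norm
      have hg := ((hgeo.mul_of_nonneg hn (fun i => (pow_pos h0 i).le)
        (fun _ => norm_nonneg _)).mul_left (C * (K * K)))
      refine Summable.of_norm_bounded hg ?_
      rintro ⟨N, n⟩
      rw [hfe]
      dsimp only
      rw [norm_mul, norm_mul, norm_mul (q ^ pad (k + 1) n k), Real.norm_of_nonneg (by positivity : 0 ≤ q ^ pad (k + 1) n k)]
      calc _ ≤ (C * q ^ N) * (((K * K) * q ^ (pad (k + 1) n k)) * ‖RT q k (pad (k + 1) n)‖) := by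
            apply mul_le_mul (hs N) _ (by positivity) (by positivity)
            exact mul_le_mul_of_nonneg_right (hw N _) (norm_nonneg _)
        _ = _ := by ring
    have hf : Summable f := e.summable_iff.1 hsum
    refine ⟨hf, ?_⟩
    change ∑' n, f n = _
    rw [← e.tsum_eq f, hsum.tsum_prod]
    congr 1
    funext N
    simp only [hfe]
    rw [tsum_mul_left]
    congr 1
    rw [(ih (fun r => (q ^ 2) ^ (r ^ 2 + r) * RB q N r) (K * K) (hw N)).2, bb,
      tsum_eq_sum (s := Finset.range (N + 1))]
    · refine Finset.sum_congr rfl fun r hr => ?_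
      rw [RB, if_pos (by simp at hr; omega)]
    · intro r hr
      rw [RB, if_neg (by simp at hr; omega)]
      ring

lemma qPoch_PP (q : ℝ) (n : ℕ) : qPoch ((q : ℂ) ^ 2) ((q : ℂ) ^ 2) n = ((PP (q ^ 2) n : ℝ) : ℂ) := by
  rw [qPoch, PP]
  push_cast
  refine Finset.prod_congr rfl fun j _ => ?_
  ring

lemma qPoch_QO (q : ℝ) (n : ℕ) : qPoch (q : ℂ) ((q : ℂ) ^ 2) n = ((QO q n : ℝ) : ℂ) := by
  rw [qPoch, QO]
  push_cast
  refine Finset.prod_congr rfl fun j _ => ?_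
  ring

lemma qPoch_RR (q : ℝ) (n : ℕ) : qPoch (-(q : ℂ)) (q : ℂ) n = ((RR q n : ℝ) : ℂ) := by
  rw [qPoch, RR]
  push_cast
  refine Finset.prod_congr rfl fun j _ => ?_
  ring

lemma Gterm_real (q : ℝ) (k : ℕ) (n : ℕ → ℕ) :
    Gterm (k + 2) (q : ℂ) n =
      (((-1) ^ (n k) * q ^ (n k * (n k + 1)) * RT q k n : ℝ) : ℂ) := by
  have hB : ∀ N r, qBinom ((q : ℂ) ^ 2) N r = ((RB q N r : ℝ) : ℂ) := by
    intro N r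
    rw [qBinom, RB]
    split_ifs
    · rw [qPoch_PP, qPoch_PP, qPoch_PP]; push_cast; rfl
    · simp
  rw [Gterm, RT, bb]
  simp only [Nat.add_sub_cancel, hB]
  rw [qPoch_QO, qPoch_RR]
  push_cast
  rw [pow_add]
  ring

lemma G_real {q : ℝ} (h0 : 0 < q) (h1 : q < 1) (k : ℕ) :
    G (k + 2) (q : ℂ) = ((∑' r : ℕ, (q ^ 2) ^ (k * (r ^ 2 + r)) * q ^ (r * (r + 1)) *
      (q ^ (r ^ 2) - q ^ ((r + 1) ^ 2)) : ℝ) : ℂ) := by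
  rw [G]
  simp only [Gterm_real]
  rw [← Complex.ofReal_tsum, ← final_sum h0 h1]
  congr 1
  refine (tuple_sum h0 h1 k (fun N => (-1) ^ N * q ^ (N * (N + 1))) 1 ?_).2
  intro N
  rw [norm_mul, norm_pow, norm_neg, norm_one, one_pow, one_mul, one_mul,
    Real.norm_of_nonneg (by positivity)]
  exact pow_le_pow_of_le_one h0.le h1.le (by nlinarith)

lemma chi_real (k n : ℕ) : chiG (k + 2) (n : ℤ) =
    (if n % (4 * k + 4) = 2 * k + 1 then 1 else 0) -
      (if n % (4 * k + 4) = 2 * k + 3 then 1 else 0) := by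
  have a1 : (4 * (((k + 2 : ℕ) : ℤ) - 1)) = ((4 * k + 4 : ℕ) : ℤ) := by push_cast; ring
  have a2 : (2 * ((k + 2 : ℕ) : ℤ) - 3) = ((2 * k + 1 : ℕ) : ℤ) := by push_cast; ring
  have a3 : (2 * ((k + 2 : ℕ) : ℤ) - 1) = ((2 * k + 3 : ℕ) : ℤ) := by push_cast; ring
  rw [chiG, a1, a2, a3]
  simp only [← Int.natCast_mod, Nat.cast_inj]
  rw [Nat.mod_eq_of_lt (by omega : 2 * k + 1 < 4 * k + 4),
    Nat.mod_eq_of_lt (by omega : 2 * k + 3 < 4 * k + 4)]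
  split_ifs <;> omega

lemma half_sum {q : ℝ} (h0 : 0 < q) (h1 : q < 1) (k c : ℕ) (hc : c < 4 * k + 4) :
    HasSum (fun n : ℕ => (if n % (4 * k + 4) = c then (1 : ℝ) else 0) *
      q ^ ((n : ℝ) ^ 2 / (8 * ((k : ℝ) + 1))))
      (∑' j : ℕ, q ^ ((((4 * k + 4) * j + c : ℕ) : ℝ) ^ 2 / (8 * ((k : ℝ) + 1)))) ∧
    Summable (fun j : ℕ => q ^ ((((4 * k + 4) * j + c : ℕ) : ℝ) ^ 2 / (8 * ((k : ℝ) + 1)))) := by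
  have hs : Summable (fun j : ℕ =>
      q ^ ((((4 * k + 4) * j + c : ℕ) : ℝ) ^ 2 / (8 * ((k : ℝ) + 1)))) := by
    refine (summable_geometric_of_lt_one h0.le h1).of_nonneg_of_le
      (fun j => (Real.rpow_pos_of_pos h0 _).le) fun j => ?_
    rw [← Real.rpow_natCast q]
    apply Real.rpow_le_rpow_of_exponent_ge h0 h1.le
    rw [le_div_iff₀ (by positivity)]
    norm_cast
    have : j ≤ j ^ 2 := by nlinarith [Nat.le_self_pow (two_ne_zero) j]
    calc j * (8 * (k + 1)) ≤ j ^ 2 * (8 * (k + 1)) := Nat.mul_le_mul_right _ this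
      _ ≤ ((4 * k + 4) * j + c) ^ 2 := by nlinarith [Nat.zero_le (k * j ^ 2), Nat.zero_le (k^2 * j ^ 2), Nat.zero_le ((4 * k + 4) * j * c)]
  refine ⟨?_, hs⟩
  let g : ℕ → ℕ := fun j => (4 * k + 4) * j + c
  have hg : Function.Injective g := by
    intro a b h
    simp only [g, Nat.add_right_cancel_iff] at h
    exact Nat.eq_of_mul_eq_mul_left (by omega) h
  rw [← hg.hasSum_iff]
  · convert hs.hasSum using 1
    funext j
    have : g j % (4 * k + 4) = c := by
      simp only [g]
      rw [Nat.mul_add_mod, Nat.mod_eq_of_lt hc]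
    simp only [Function.comp_apply, this, if_true, one_mul]
    rfl
  · intro n hn
    rw [if_neg, zero_mul]
    intro h
    apply hn
    refine ⟨n / (4 * k + 4), ?_⟩
    simp only [g]
    rw [← h]
    exact Nat.div_add_mod _ _

lemma rhs_real {q : ℝ} (h0 : 0 < q) (h1 : q < 1) (k : ℕ) :
    ∑' n : ℕ, (chiG (k + 2) n : ℝ) * q ^ ((n : ℝ) ^ 2 / (8 * ((k : ℝ) + 1))) =
    q ^ ((2 * (k : ℝ) + 1) ^ 2 / (8 * ((k : ℝ) + 1))) *
    ∑' r : ℕ, (q ^ 2) ^ (k * (r ^ 2 + r)) * q ^ (r * (r + 1)) *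
      (q ^ (r ^ 2) - q ^ ((r + 1) ^ 2)) := by
  obtain ⟨s1, t1⟩ := half_sum h0 h1 k (2 * k + 1) (by omega)
  obtain ⟨s2, t2⟩ := half_sum h0 h1 k (2 * k + 3) (by omega)
  have h3 := (s1.sub s2).tsum_eq
  have e1 : ∀ n : ℕ, (chiG (k + 2) n : ℝ) * q ^ ((n : ℝ) ^ 2 / (8 * ((k : ℝ) + 1))) =
      (if n % (4 * k + 4) = 2 * k + 1 then (1 : ℝ) else 0) *
        q ^ ((n : ℝ) ^ 2 / (8 * ((k : ℝ) + 1))) -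
      (if n % (4 * k + 4) = 2 * k + 3 then (1 : ℝ) else 0) *
        q ^ ((n : ℝ) ^ 2 / (8 * ((k : ℝ) + 1))) := by
    intro n
    rw [chi_real, ← sub_mul]
    push_cast
    rfl
  simp only [e1]
  rw [h3, ← t1.tsum_sub t2, ← tsum_mul_left]
  congr 1
  funext r
  rw [mul_sub, mul_sub]
  have hk : (k : ℝ) + 1 ≠ 0 := by positivity
  congr 1
  · rw [← pow_mul, ← pow_add, ← pow_add, ← Real.rpow_natCast q, ← Real.rpow_add h0]
    congr 1
    push_cast
    field_simp
    ring
  · rw [← pow_mul, ← pow_add, ← pow_add, ← Real.rpow_natCast q, ← Real.rpow_add h0]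
    congr 1
    push_cast
    field_simp
    ring

theorem stmt11 (m : ℕ) (hm : 2 ≤ m) (q : ℝ) (hq0 : 0 < q) (hq1 : q < 1) :
    ((m : ℂ) - 1) *
        ((q ^ ((2 * (m : ℝ) - 3) ^ 2 / (8 * ((m : ℝ) - 1))) : ℝ) : ℂ) * G m (q : ℂ) =
      ((m : ℂ) - 1) *
        ∑' k : ℕ, (chiG m k : ℂ) * ((q ^ ((k : ℝ) ^ 2 / (8 * ((m : ℝ) - 1))) : ℝ) : ℂ) := by
  obtain ⟨k, rfl⟩ := Nat.exists_eq_add_of_le' hm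
  rw [mul_assoc]
  congr 1
  have a1 : (((k + 2 : ℕ) : ℝ) - 1) = (k : ℝ) + 1 := by push_cast; ring
  have a2 : (2 * ((k + 2 : ℕ) : ℝ) - 3) = 2 * (k : ℝ) + 1 := by push_cast; ring
  rw [a1, a2, G_real hq0 hq1, ← Complex.ofReal_mul, ← rhs_real hq0 hq1, Complex.ofReal_tsum]
  congr 1
  funext n
  push_cast
  rfl
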